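/- arXiv:1211.5879 — 4 statements merged into one kernel-verified Lean document; each statement's English description precedes it below -/
import Mathlib

section
/- Let S be an invertible symmetric n × n real matrix (n ≥ 1). The set {g : g is an n × n real matrix with gᵀ S g = S} is a compact subset of the space of n × n real matrices if and only if S is positive definite or negative definite. -/
open Matrix

/-!
If `S` is positive definite, write `S = Bᴴ B` with `B` invertible; then `g ↦ B g B⁻¹` carries the
isometries of `S` into the compact unitary group. The same applies to `-S`, which has the same
isometries.

If `S` is neither positive nor negative definite, it has an isotropic vector `v ≠ 0`: a form that
takes both signs vanishes on the line through two vectors of opposite signs, by the quadratic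
formula. Every nonzero scalar `t` is then an eigenvalue, at `v`, of some isometry: if `S v ≠ 0`,
complete `v` to a hyperbolic pair `(v, w)`, scale `v` by `t` and `w` by `t⁻¹`, and fix the
orthogonal complement of the pair; if `S v = 0`, take `1 + (t - 1) v yᵀ` with `yᵀ v = 1`. So the
isometry group is unbounded.
-/

section Compact

open scoped ComplexOrder

variable {ι 𝕜 : Type*} [Fintype ι] [RCLike 𝕜]

lemma isCompact_unitaryGroup [DecidableEq ι] :
    IsCompact (unitaryGroup ι 𝕜 : Set (Matrix ι ι 𝕜)) :=
  .of_isClosed_subset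
    (isCompact_univ_pi fun _ ↦ isCompact_univ_pi fun _ ↦ isCompact_closedBall (0 : 𝕜) 1)
    isClosed_unitary
    fun _ hU i _ j _ ↦ mem_closedBall_zero_iff.mpr (entry_norm_bound_of_unitary hU i j)

open scoped MatrixOrder Matrix.Norms.L2Operator in
lemma posDef_iff_exists_isUnit_eq_conjTranspose_mul_self [DecidableEq ι] {S : Matrix ι ι 𝕜} :
    S.PosDef ↔ ∃ B : Matrix ι ι 𝕜, IsUnit B ∧ S = Bᴴ * B :=
  isStrictlyPositive_iff_posDef.symm.trans CStarAlgebra.isStrictlyPositive_iff_eq_star_mul_self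

lemma mul_mul_mem_unitaryGroup_of_mul_eq_one {α : Type*} [DecidableEq ι] [CommRing α] [StarRing α]
    {B C g : Matrix ι ι α} (hBC : B * C = 1) (hg : gᴴ * (Bᴴ * B) * g = Bᴴ * B) :
    B * g * C ∈ unitaryGroup ι α := by
  rw [mem_unitaryGroup_iff', star_eq_conjTranspose]
  calc (B * g * C)ᴴ * (B * g * C) = Cᴴ * (gᴴ * (Bᴴ * B) * g) * C := by
        simp only [conjTranspose_mul, mul_assoc]
    _ = (B * C)ᴴ * (B * C) := by simp only [hg, conjTranspose_mul, mul_assoc]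
    _ = 1 := by rw [hBC, conjTranspose_one, mul_one]

lemma isCompact_isometries_of_posDef {S : Matrix ι ι 𝕜} (hS : S.PosDef) :
    IsCompact {g : Matrix ι ι 𝕜 | gᴴ * S * g = S} := by
  classical
  obtain ⟨B, hB, rfl⟩ := posDef_iff_exists_isUnit_eq_conjTranspose_mul_self.mp hS
  obtain ⟨C, hBC, hCB⟩ := isUnit_iff_exists.mp hB
  refine .of_isClosed_subset
    (isCompact_unitaryGroup.image (f := fun U ↦ C * U * B) (by fun_prop))
    (isClosed_eq (by fun_prop) continuous_const)
    fun g hg ↦ ⟨B * g * C, mul_mul_mem_unitaryGroup_of_mul_eq_one hBC hg, ?_⟩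
  calc C * (B * g * C) * B = C * B * g * (C * B) := by simp only [mul_assoc]
    _ = g := by rw [hCB, one_mul, mul_one]

end Compact

section Definite

lemma posDef_or_posDef_neg_of_anisotropic {M : Type*} [AddCommGroup M] [Module ℝ M]
    {Q : QuadraticForm ℝ M} (hQ : Q.Anisotropic) : Q.PosDef ∨ (-Q).PosDef := by
  by_contra! h
  simp only [QuadraticMap.PosDef, not_forall, not_lt] at h
  obtain ⟨⟨x, hx, hQx⟩, y, hy, hQy⟩ := h
  replace hQx : Q x < 0 := hQx.lt_of_ne (mt (hQ x) hx)
  replace hQy : 0 < Q y := (neg_nonpos.mp hQy).lt_of_ne' (mt (hQ y) hy)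
  have hdiscrim : 0 ≤ discrim (Q x) (QuadraticMap.polar Q y x) (Q y) := by
    rw [discrim]
    nlinarith [mul_neg_of_neg_of_pos hQx hQy]
  obtain ⟨t, ht⟩ := exists_quadratic_eq_zero hQx.ne ⟨_, (Real.mul_self_sqrt hdiscrim).symm⟩
  have hisotropic : Q (y + t • x) = 0 := by
    rw [QuadraticMap.map_add Q, QuadraticMap.map_smul, QuadraticMap.polar_smul_right, smul_eq_mul,
      smul_eq_mul]
    linear_combination ht
  have hyx : y = -(t • x) := eq_neg_of_add_eq_zero_left (hQ _ hisotropic)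
  have hQyx : Q y = t * t * Q x := by
    rw [hyx, QuadraticMap.map_neg, QuadraticMap.map_smul, smul_eq_mul]
  nlinarith [mul_self_nonneg t]

lemma exists_isotropic_of_not_posDef {ι : Type*} [Fintype ι] {S : Matrix ι ι ℝ}
    (hS : S.IsSymm) (hpos : ¬ S.PosDef) (hneg : ¬ (-S).PosDef) :
    ∃ v ≠ 0, v ⬝ᵥ S *ᵥ v = 0 := by
  classical
  have happly (A : Matrix ι ι ℝ) (v : ι → ℝ) : A.toQuadraticForm' v = v ⬝ᵥ A *ᵥ v :=
    toLinearMap₂'_apply' A v v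
  have hform_neg : (-S).toQuadraticForm' = -S.toQuadraticForm' := by
    ext v
    simp [happly, neg_mulVec]
  by_contra! hne
  have hanisotropic : S.toQuadraticForm'.Anisotropic := fun v hv ↦
    by_contra fun hv0 ↦ hne v hv0 (happly S v ▸ hv)
  rcases posDef_or_posDef_neg_of_anisotropic hanisotropic with h | h
  · exact hpos (.of_toQuadraticForm' hS h)
  · exact hneg (.of_toQuadraticForm' hS.neg (hform_neg ▸ h))

end Definite

section Isotropic

variable {ι K : Type*} [Fintype ι]

lemma dotProduct_mulVec_comm_of_isSymm [CommSemiring K] {S : Matrix ι ι K} (hS : S.IsSymm)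
    (x y : ι → K) : x ⬝ᵥ S *ᵥ y = y ⬝ᵥ S *ᵥ x := by
  rw [dotProduct_mulVec, ← mulVec_transpose, hS.eq, dotProduct_comm]

section Field

variable [Field K] {S : Matrix ι ι K} {v w : ι → K} {t : K}

/-- For a hyperbolic pair `(v, w)` of the symmetric form `S`, the linear map that scales `v` by `t`
and `w` by `t⁻¹` and fixes the `S`-orthogonal complement of both. These are the isometries that make
the group of an isotropic form unbounded. -/
def hyperbolicScaling [DecidableEq ι] (S : Matrix ι ι K) (v w : ι → K) (t : K) : Matrix ι ι K :=
  1 + (t - 1) • vecMulVec v (S *ᵥ w) + (t⁻¹ - 1) • vecMulVec w (S *ᵥ v)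

lemma transpose_hyperbolicScaling_mul_mul [DecidableEq ι] (hS : S.IsSymm)
    (hv : v ⬝ᵥ S *ᵥ v = 0) (hw : w ⬝ᵥ S *ᵥ w = 0) (hvw : v ⬝ᵥ S *ᵥ w = 1) (ht : t ≠ 0) :
    (hyperbolicScaling S v w t)ᵀ * S * hyperbolicScaling S v w t = S := by
  have hwv : w ⬝ᵥ S *ᵥ v = 1 := dotProduct_mulVec_comm_of_isSymm hS w v ▸ hvw
  have hvecMul (x : ι → K) : x ᵥ* S = S *ᵥ x := by rw [← mulVec_transpose, hS.eq]
  simp only [hyperbolicScaling, transpose_add, transpose_one, transpose_smul, transpose_vecMulVec,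
    add_mul, mul_add, one_mul, mul_one, smul_mul_assoc, mul_smul_comm, vecMulVec_mul,
    mul_vecMulVec, vecMulVec_mulVec, hvecMul, dotProduct_comm (S *ᵥ _), hv, hw, hvw, hwv]
  ext i j
  simp only [MulOpposite.op_zero, zero_smul, zero_vecMulVec, smul_zero, add_zero,
    MulOpposite.op_one, one_smul, smul_add, Matrix.add_apply, Matrix.smul_apply, vecMulVec_apply,
    smul_eq_mul]
  -- The cross terms cancel because `(t - 1) + (t⁻¹ - 1) + (t - 1) * (t⁻¹ - 1) = 0`.
  field_simp
  ring

lemma hyperbolicScaling_mulVec_left [DecidableEq ι] (hv : v ⬝ᵥ S *ᵥ v = 0)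
    (hvw : v ⬝ᵥ S *ᵥ w = 1) : hyperbolicScaling S v w t *ᵥ v = t • v := by
  simp only [hyperbolicScaling, add_mulVec, one_mulVec, smul_mulVec, vecMulVec_mulVec,
    dotProduct_comm (S *ᵥ _), hv, hvw]
  simp [sub_smul]

lemma exists_dotProduct_eq_one {x : ι → K} (hx : x ≠ 0) : ∃ y, y ⬝ᵥ x = 1 := by
  classical
  obtain ⟨i, hi⟩ := Function.ne_iff.mp hx
  exact ⟨Pi.single i (x i)⁻¹, by simpa using inv_mul_cancel₀ hi⟩

lemma exists_hyperbolic_pair [NeZero (2 : K)] (hS : S.IsSymm) (hv : v ⬝ᵥ S *ᵥ v = 0)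
    (hSv : S *ᵥ v ≠ 0) : ∃ w, w ⬝ᵥ S *ᵥ w = 0 ∧ v ⬝ᵥ S *ᵥ w = 1 := by
  obtain ⟨y, hyv⟩ := exists_dotProduct_eq_one hSv
  have hvy : v ⬝ᵥ S *ᵥ y = 1 := dotProduct_mulVec_comm_of_isSymm hS v y ▸ hyv
  refine ⟨y - (y ⬝ᵥ S *ᵥ y / 2) • v, ?_, ?_⟩ <;>
    simp only [mulVec_sub, mulVec_smul, sub_dotProduct, dotProduct_sub, smul_dotProduct,
      dotProduct_smul, smul_eq_mul, hyv, hvy, hv]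
  · field_simp
    ring
  · ring

lemma exists_isometry_mulVec_eq_smul [NeZero (2 : K)] (hS : S.IsSymm) (hv0 : v ≠ 0)
    (hv : v ⬝ᵥ S *ᵥ v = 0) (ht : t ≠ 0) :
    ∃ g : Matrix ι ι K, gᵀ * S * g = S ∧ g *ᵥ v = t • v := by
  classical
  by_cases hSv : S *ᵥ v = 0
  · obtain ⟨y, hyv⟩ := exists_dotProduct_eq_one hv0
    have hvS : v ᵥ* S = 0 := by rw [← mulVec_transpose, hS.eq, hSv]
    refine ⟨1 + (t - 1) • vecMulVec v y, ?_, ?_⟩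
    · simp [add_mul, mul_add, transpose_vecMulVec, vecMulVec_mul, mul_vecMulVec, hSv, hvS]
    · simp only [add_mulVec, one_mulVec, smul_mulVec, vecMulVec_mulVec, hyv]
      simp [sub_smul]
  · obtain ⟨w, hw, hvw⟩ := exists_hyperbolic_pair hS hv hSv
    exact ⟨hyperbolicScaling S v w t, transpose_hyperbolicScaling_mul_mul hS hv hw hvw ht,
      hyperbolicScaling_mulVec_left hv hvw⟩

end Field

lemma not_isCompact_isometries_of_isotropic [NontriviallyNormedField K] [NeZero (2 : K)]
    {S : Matrix ι ι K} {v : ι → K} (hS : S.IsSymm) (hv0 : v ≠ 0) (hv : v ⬝ᵥ S *ᵥ v = 0) :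
    ¬ IsCompact {g : Matrix ι ι K | gᵀ * S * g = S} := by
  intro hcompact
  obtain ⟨i, hi⟩ := Function.ne_iff.mp hv0
  obtain ⟨C, hC⟩ :=
    (hcompact.image (f := fun g ↦ (g *ᵥ v) i) (by fun_prop)).isBounded.exists_norm_le
  obtain ⟨c, hc⟩ := NormedField.exists_lt_norm K (max C 0)
  have hc0 : c ≠ 0 := norm_pos_iff.mp ((le_max_right C 0).trans_lt hc)
  obtain ⟨g, hg, hgv⟩ := exists_isometry_mulVec_eq_smul hS hv0 hv (div_ne_zero hc0 hi)
  have hgvi : (g *ᵥ v) i = c := by rw [hgv, Pi.smul_apply, smul_eq_mul, div_mul_cancel₀ c hi]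
  exact (hC c ⟨g, hg, hgvi⟩).not_gt ((le_max_left C 0).trans_lt hc)

end Isotropic

theorem isCompact_orthogonalGroup_iff_definite_general {ι : Type*} [Fintype ι]
    {S : Matrix ι ι ℝ} (hS : S.IsSymm) :
    IsCompact {g : Matrix ι ι ℝ | gᵀ * S * g = S} ↔ S.PosDef ∨ (-S).PosDef := by
  constructor
  · contrapose!
    rintro ⟨hpos, hneg⟩
    obtain ⟨v, hv0, hv⟩ := exists_isotropic_of_not_posDef hS hpos hneg
    exact not_isCompact_isometries_of_isotropic hS hv0 hv
  · rintro (hpos | hneg)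
    · simpa using isCompact_isometries_of_posDef hpos
    · simpa using isCompact_isometries_of_posDef hneg

/-- For an invertible symmetric real matrix `S`, the "orthogonal group"
`{g | gᵀ S g = S}` is compact iff `S` is positive definite or negative
definite.  (Compactness of the stabilizer of the generic character `χ_S`.) -/
theorem isCompact_orthogonalGroup_iff_definite
    {n : ℕ} (hn : 1 ≤ n) (S : Matrix (Fin n) (Fin n) ℝ)
    (hsymm : Sᵀ = S) (hinv : IsUnit S.det) :
    IsCompact {g : Matrix (Fin n) (Fin n) ℝ | gᵀ * S * g = S} ↔
      (S.PosDef ∨ (-S).PosDef) :=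
  isCompact_orthogonalGroup_iff_definite_general hsymm
end

section
/- Let S be a symmetric n × n real matrix (n ≥ 1). The orbit {g S gᵀ : g ∈ GL(n,ℝ)} is an open subset of the real vector space of symmetric n × n matrices if and only if S is invertible. -/
open Matrix

/-!
Symmetric matrices are the self-adjoint elements of the algebra of matrices with the transpose as
star operation, so let `s` be a self-adjoint element of a finite-dimensional `*`-algebra. At `g`,
the map `g ↦ g * s * star g` has derivative `k ↦ a + star a` with `a = k * s * star g`. When `s` and
`g` are units, `k ↦ a` is bijective, and every self-adjoint `y` is `a + star a` for `a = y / 2`; so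
the map is a submersion onto the self-adjoint elements at every unit `g`, and the orbit is open.
Conversely, the self-adjoint units are dense, because `x + t • 1` is a nonunit for only finitely
many `t`. So an open orbit contains a unit, which forces `s` to be a unit.
-/

open Topology

section Orbit

variable {A : Type*} [Ring A] [StarRing A]

/-- The map `g ↦ g * s * star g` for a self-adjoint element `s`. It is defined for all `g`, unit or
not, so that it can be differentiated on a vector space. -/
def starCongruence (s : selfAdjoint A) (g : A) : selfAdjoint A :=
  ⟨g * s * star g, s.2.conjugate g⟩

/-- The orbit of a self-adjoint element `s` under the action `(g, s) ↦ g * s * star g` of the group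
of units, as a subset of the self-adjoint elements. -/
def starCongruenceOrbit (s : selfAdjoint A) : Set (selfAdjoint A) :=
  Set.range fun g : Aˣ => starCongruence s g

theorem self_mem_starCongruenceOrbit (s : selfAdjoint A) : s ∈ starCongruenceOrbit s :=
  ⟨1, Subtype.ext <| by simp [starCongruence]⟩

theorem isUnit_starCongruence_iff (s : selfAdjoint A) (g : Aˣ) :
    IsUnit (starCongruence s g : A) ↔ IsUnit (s : A) := by
  change IsUnit ((g : A) * s * (star g : Aˣ)) ↔ _
  rw [Units.isUnit_mul_units, Units.isUnit_units_mul]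

end Orbit

theorem finite_spectrum_of_isIntegral {𝕜 A : Type*} [Field 𝕜] [Ring A] [Algebra 𝕜 A] {a : A}
    (ha : IsIntegral 𝕜 a) : (spectrum 𝕜 a).Finite := by
  nontriviality A
  refine (Polynomial.finite_setOfPred_isRoot (minpoly.ne_zero ha)).subset fun t ht => ?_
  have heval := spectrum.subset_polynomial_aeval a (minpoly 𝕜 a) ⟨t, ht, rfl⟩
  rwa [minpoly.aeval, spectrum.zero_eq] at heval

theorem dense_selfAdjoint_isUnit (𝕜 : Type*) {A : Type*} [Field 𝕜] [TopologicalSpace 𝕜]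
    [T1Space 𝕜] [∀ t : 𝕜, (𝓝[≠] t).NeBot] [StarRing 𝕜] [TrivialStar 𝕜] [Ring A] [Algebra 𝕜 A]
    [FiniteDimensional 𝕜 A] [TopologicalSpace A] [ContinuousAdd A] [ContinuousSMul 𝕜 A] [StarRing A]
    [StarModule 𝕜 A] : Dense {x : selfAdjoint A | IsUnit (x : A)} := by
  intro x
  have hdense : Dense (spectrum 𝕜 (-x : A))ᶜ := by
    rw [Set.compl_eq_univ_sdiff]
    exact dense_univ.sdiff_finite
      (finite_spectrum_of_isIntegral (Algebra.IsIntegral.isIntegral (-x : A)))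
  let line : 𝕜 → selfAdjoint A := fun t => t • 1 + x
  have hline : Continuous line := by
    refine Continuous.subtype_mk ?_ _
    fun_prop
  have hmaps : Set.MapsTo line (spectrum 𝕜 (-x : A))ᶜ {y | IsUnit (y : A)} := by
    intro t ht
    rwa [Set.mem_compl_iff, spectrum.notMem_iff, sub_neg_eq_add,
      Algebra.algebraMap_eq_smul_one] at ht
  have hzero : line 0 = x := by simp only [line, zero_smul, zero_add]
  exact hzero ▸ map_mem_closure hline (hdense 0) hmaps

section Submersion

variable {𝕜 A : Type*} [NontriviallyNormedField 𝕜] [StarRing 𝕜] [TrivialStar 𝕜]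
  [NormedRing A] [NormedAlgebra 𝕜 A] [StarRing A] [ContinuousStar A] [StarModule 𝕜 A]

/-- The normed space of self-adjoint elements. Mathlib's instance assumes that `star` is isometric,
which fails for the transpose in the `L∞` operator norm. -/
local instance selfAdjointNormedSpace : NormedSpace 𝕜 (selfAdjoint A) where
  norm_smul_le c x := norm_smul_le c (x : A)

variable (𝕜) in
/-- The derivative `k ↦ k * s * star g + star (k * s * star g)` of `starCongruence s` at `g`. -/
noncomputable def starCongruenceDeriv [Invertible (2 : 𝕜)] (s : selfAdjoint A) (g : A) :
    A →L[𝕜] selfAdjoint A :=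
  (2 : 𝕜) • selfAdjointPartL 𝕜 A ∘L (ContinuousLinearMap.mul 𝕜 A).flip (s * star g)

theorem hasStrictFDerivAt_starCongruence [Invertible (2 : 𝕜)] (s : selfAdjoint A) (g : A) :
    HasStrictFDerivAt (starCongruence s) (starCongruenceDeriv 𝕜 s g) g := by
  have hpart : selfAdjointPartL 𝕜 A ∘ (fun h => h * s * star h) = starCongruence s :=
    funext fun h => (s.2.conjugate h).selfAdjointPart_apply 𝕜
  have hmul := ((hasStrictFDerivAt_id g).mul_const' (s : A)).mul'
    (starL' 𝕜 : A ≃L[𝕜] A).toContinuousLinearMap.hasStrictFDerivAt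
  rw [← hpart]
  refine ((selfAdjointPartL 𝕜 A).hasStrictFDerivAt.comp g hmul).congr_fderiv ?_
  ext k
  change ⅟(2 : 𝕜) • (g * s * star k + k * s * star g + star (g * s * star k + k * s * star g)) =
    (2 : 𝕜) • ⅟(2 : 𝕜) • (k * (s * star g) + star (k * (s * star g)))
  simp only [star_add, star_mul, star_star, selfAdjoint.star_val_eq, two_smul, ← smul_add,
    mul_assoc]
  congr 1
  abel

theorem surjective_starCongruenceDeriv [Invertible (2 : 𝕜)] {s : selfAdjoint A} {g : A}
    (hs : IsUnit (s : A)) (hg : IsUnit g) : Function.Surjective (starCongruenceDeriv 𝕜 s g) := by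
  intro y
  obtain ⟨u, hu⟩ := hs.mul hg.star
  refine ⟨⅟(2 : 𝕜) • (y * (↑u⁻¹ : A)), ?_⟩
  change (2 : 𝕜) • selfAdjointPart 𝕜 (⅟(2 : 𝕜) • (y * (↑u⁻¹ : A)) * (s * star g)) = y
  rw [← hu, smul_mul_assoc, Units.inv_mul_cancel_right, map_smul, smul_invOf_smul]
  exact y.2.selfAdjointPart_apply 𝕜

variable (𝕜) in
theorem isOpen_starCongruenceOrbit [NeZero (2 : 𝕜)] [CompleteSpace A] {s : selfAdjoint A}
    (hs : IsUnit (s : A)) : IsOpen (starCongruenceOrbit s) := by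
  let : Invertible (2 : 𝕜) := invertibleOfNonzero two_ne_zero
  have : CompleteSpace (selfAdjoint A) :=
    (isClosed_eq continuous_star continuous_id).completeSpace_coe
  rw [isOpen_iff_mem_nhds]
  rintro _ ⟨g, rfl⟩
  have hmap : Filter.map (starCongruence s) (𝓝 (g : A)) = 𝓝 (starCongruence s g) :=
    (hasStrictFDerivAt_starCongruence (𝕜 := 𝕜) s g).map_nhds_eq_of_surj
      (LinearMap.range_eq_top.mpr (surjective_starCongruenceDeriv hs g.isUnit))
  rw [← hmap]
  filter_upwards [Filter.image_mem_map (Units.isOpen.mem_nhds g.isUnit)]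
  rintro _ ⟨_, ⟨h, rfl⟩, rfl⟩
  exact ⟨h, rfl⟩

end Submersion

theorem isOpen_starCongruenceOrbit_iff (𝕜 : Type*) {A : Type*} [NontriviallyNormedField 𝕜]
    [CompleteSpace 𝕜] [StarRing 𝕜] [TrivialStar 𝕜] [NeZero (2 : 𝕜)] [NormedRing A]
    [NormedAlgebra 𝕜 A] [FiniteDimensional 𝕜 A] [StarRing A] [StarModule 𝕜 A] (s : selfAdjoint A) :
    IsOpen (starCongruenceOrbit s) ↔ IsUnit (s : A) := by
  have : CompleteSpace A := FiniteDimensional.complete 𝕜 A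
  let starLinear : A →ₗ[𝕜] A :=
    { toFun := star
      map_add' := star_add
      map_smul' c a := by rw [star_smul, star_trivial, RingHom.id_apply] }
  have : ContinuousStar A := ⟨starLinear.continuous_of_finiteDimensional⟩
  refine ⟨fun hopen => ?_, isOpen_starCongruenceOrbit 𝕜⟩
  obtain ⟨_, hunit, g, rfl⟩ := (dense_selfAdjoint_isUnit 𝕜).exists_mem_open hopen
    ⟨s, self_mem_starCongruenceOrbit s⟩
  exact (isUnit_starCongruence_iff s g).mp hunit

attribute [local instance] Matrix.linftyOpNormedRing Matrix.linftyOpNormedAlgebra in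
theorem isOpen_orbit_iff_isUnit_det_general {n 𝕜 : Type*} [Fintype n] [DecidableEq n]
    [NontriviallyNormedField 𝕜] [CompleteSpace 𝕜] [NeZero (2 : 𝕜)] (S : Matrix n n 𝕜)
    (hsymm : Sᵀ = S) :
    IsOpen {X : {X : Matrix n n 𝕜 // Xᵀ = X} |
        ∃ g : GL n 𝕜, (X : Matrix n n 𝕜) = (g : Matrix n n 𝕜) * S * (g : Matrix n n 𝕜)ᵀ} ↔
      IsUnit S.det := by
  let : StarRing 𝕜 := starRingOfComm
  have : TrivialStar 𝕜 := ⟨fun _ => rfl⟩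
  have hsymm_iff (X : Matrix n n 𝕜) : Xᵀ = X ↔ X ∈ selfAdjoint (Matrix n n 𝕜) := by
    rw [selfAdjoint.mem_iff, star_eq_conjTranspose, conjTranspose_eq_transpose_of_trivial]
  let e := (Homeomorph.refl (Matrix n n 𝕜)).subtype hsymm_iff
  have horbit : {X : {X : Matrix n n 𝕜 // Xᵀ = X} |
        ∃ g : GL n 𝕜, (X : Matrix n n 𝕜) = (g : Matrix n n 𝕜) * S * (g : Matrix n n 𝕜)ᵀ} =
      e ⁻¹' starCongruenceOrbit (e ⟨S, hsymm⟩) :=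
    Set.ext fun X => exists_congr fun g =>
      ⟨fun h => Subtype.ext h.symm, fun h => (congrArg Subtype.val h).symm⟩
  rw [← isUnit_iff_isUnit_det, horbit, e.isOpen_preimage]
  exact isOpen_starCongruenceOrbit_iff 𝕜 (e ⟨S, hsymm⟩)

/-- A symmetric real matrix `S` has open `GL(n,ℝ)`-orbit `{g S gᵀ}` in the
space of symmetric matrices iff `S` is invertible.  (Characterization of the
generic characters of the abelian unipotent radical of the Siegel parabolic
of `Sp(n,ℝ)`.) -/
theorem isOpen_orbit_iff_isUnit_det
    {n : ℕ} (hn : 1 ≤ n) (S : Matrix (Fin n) (Fin n) ℝ) (hsymm : Sᵀ = S) :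
    IsOpen {X : {X : Matrix (Fin n) (Fin n) ℝ // Xᵀ = X} |
        ∃ g : Matrix.GeneralLinearGroup (Fin n) ℝ,
          (X : Matrix (Fin n) (Fin n) ℝ) = (g : Matrix (Fin n) (Fin n) ℝ) * S *
            (g : Matrix (Fin n) (Fin n) ℝ)ᵀ} ↔
      IsUnit S.det := by
  exact isOpen_orbit_iff_isUnit_det_general S hsymm
end

section
/- Let n ≥ 1 and let e₁, …, eₙ be the standard basis of ℝⁿ. Set Φ⁺ = {e_i − e_j : 1 ≤ i < j ≤ n} ∪ {e_i + e_j : 1 ≤ i ≤ j ≤ n} (so in particular 2e_i ∈ Φ⁺). Let w : ℝⁿ → ℝⁿ be a linear automorphism which is a signed permutation, i.e. for every i there are an index σ(i) and a sign η(i) ∈ {1, −1} with w(e_i) = η(i) e_{σ(i)}. Suppose that (a) w(e_i − e_j) ∈ Φ⁺ for all i < j, and (b) for every i, w⁻¹(e_i) ∈ {−e₁, …, −eₙ}. Then w(e_i) = −e_{n+1−i} for all i. -/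
noncomputable section

/-- The standard basis vector `eᵢ` of `ℝⁿ`. -/
def stdVec (n : ℕ) (i : Fin n) : Fin n → ℝ := Pi.single i 1

/-- The positive roots of type `Cₙ`:
`Φ⁺ = {eᵢ − eⱼ : i < j} ∪ {eᵢ + eⱼ : i ≤ j}`. -/
def typeCPos (n : ℕ) : Set (Fin n → ℝ) :=
  {v | ∃ i j : Fin n, i < j ∧ v = stdVec n i - stdVec n j} ∪
    {v | ∃ i j : Fin n, i ≤ j ∧ v = stdVec n i + stdVec n j}

/-!
Pair vectors with `ρ = (n, n - 1, …, 1)`, the half sum of the positive roots. It is strictly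
decreasing with positive entries, so it is positive on every positive root and on every `eᵢ`.
The second fact rules out the sign `+1`: if `w(eᵢ) = eⱼ`, then `w⁻¹(eⱼ) = eᵢ`, which is not of
the form `-eₖ`. Hence `w(eᵢ) = -e_{σ(i)}`, and `w(eᵢ - eⱼ) = e_{σ(j)} - e_{σ(i)}` is a positive
root only if `σ(j) < σ(i)`. So `σ` reverses the order of a finite chain, which can be done in only
one way.
-/

/-- The pairing `v ↦ ⟨ρ, v⟩` with the half sum `ρ = (n, n - 1, …, 1)` of the positive roots of
type `Cₙ`. Since `Fin n` is indexed from `0`, the entry of `ρ` at `i` is `n - i`. It serves to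
detect positivity of roots. -/
def rhoPairing (n : ℕ) : (Fin n → ℝ) →ₗ[ℝ] ℝ :=
  Fintype.linearCombination ℝ fun i : Fin n ↦ (n : ℝ) - i

theorem rhoPairing_stdVec {n : ℕ} (i : Fin n) : rhoPairing n (stdVec n i) = n - i := by
  rw [rhoPairing, stdVec, Fintype.linearCombination_apply_single, one_smul]

theorem rhoPairing_stdVec_pos {n : ℕ} (i : Fin n) : 0 < rhoPairing n (stdVec n i) := by
  rw [rhoPairing_stdVec, sub_pos, Nat.cast_lt]
  exact i.isLt

theorem rhoPairing_stdVec_sub_pos_iff {n : ℕ} {i j : Fin n} :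
    0 < rhoPairing n (stdVec n i - stdVec n j) ↔ i < j := by
  rw [map_sub, rhoPairing_stdVec, rhoPairing_stdVec, sub_sub_sub_cancel_left, sub_pos,
    Nat.cast_lt, Fin.lt_def]

theorem rhoPairing_pos_of_mem_typeCPos {n : ℕ} {v : Fin n → ℝ} (hv : v ∈ typeCPos n) :
    0 < rhoPairing n v := by
  rcases hv with ⟨i, j, hij, rfl⟩ | ⟨i, j, -, rfl⟩
  · exact rhoPairing_stdVec_sub_pos_iff.mpr hij
  · rw [map_add]
    exact add_pos (rhoPairing_stdVec_pos i) (rhoPairing_stdVec_pos j)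

theorem stdVec_sub_stdVec_mem_typeCPos_iff {n : ℕ} {i j : Fin n} :
    stdVec n i - stdVec n j ∈ typeCPos n ↔ i < j :=
  ⟨fun h ↦ rhoPairing_stdVec_sub_pos_iff.mp (rhoPairing_pos_of_mem_typeCPos h),
    fun h ↦ Or.inl ⟨i, j, h, rfl⟩⟩

theorem stdVec_ne_neg_stdVec {n : ℕ} (i j : Fin n) : stdVec n i ≠ -stdVec n j := by
  intro h
  have hρ : rhoPairing n (stdVec n i) = -rhoPairing n (stdVec n j) := by rw [h, map_neg]
  linarith [rhoPairing_stdVec_pos i, rhoPairing_stdVec_pos j]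

theorem strictAnti_unique {α : Type*} [LinearOrder α] [Finite α] {f g : α → α}
    (hf : StrictAnti f) (hg : StrictAnti g) : f = g :=
  hg.injective.comp_left ((hg.comp hf).eq_id.trans (hg.comp hg).eq_id.symm)

/-- Combinatorial core of the identification of the distinguished Weyl group
element `v^M`: a signed permutation `w` sending all `eᵢ − eⱼ` (`i < j`) into
`Φ⁺` and with `w⁻¹(eᵢ)` a negative standard basis vector for every `i` must be
`w(eᵢ) = −e_{n+1−i}`. -/
theorem signed_permutation_longest_element
    (n : ℕ) (hn : 1 ≤ n)
    (w : (Fin n → ℝ) ≃ₗ[ℝ] (Fin n → ℝ))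
    (hsigned : ∀ i : Fin n, ∃ (j : Fin n) (η : ℝ),
      (η = 1 ∨ η = -1) ∧ w (stdVec n i) = η • stdVec n j)
    (ha : ∀ i j : Fin n, i < j → w (stdVec n i - stdVec n j) ∈ typeCPos n)
    (hb : ∀ i : Fin n, ∃ j : Fin n, w.symm (stdVec n i) = -stdVec n j) :
    ∀ i : Fin n, w (stdVec n i) = -stdVec n (Fin.rev i) := by
  have hneg : ∀ i, ∃ j, w (stdVec n i) = -stdVec n j := by
    intro i
    obtain ⟨j, η, rfl | rfl, hw⟩ := hsigned i
    · obtain ⟨k, hk⟩ := hb j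
      have hsymm : w.symm (stdVec n j) = stdVec n i := by
        rw [w.symm_apply_eq, hw, one_smul]
      exact absurd (hsymm.symm.trans hk) (stdVec_ne_neg_stdVec i k)
    · exact ⟨j, by rw [hw, neg_one_smul]⟩
  choose σ hσ using hneg
  have hσ_anti : StrictAnti σ := by
    intro i j hij
    have hroot := ha i j hij
    rwa [map_sub, hσ, hσ, neg_sub_neg, stdVec_sub_stdVec_mem_typeCPos_iff] at hroot
  intro i
  rw [hσ, strictAnti_unique hσ_anti Fin.rev_strictAnti]

end
end

section
/- Let n ≥ 1 and let p ∈ ℂ[x₁, …, xₙ] be a homogeneous polynomial of degree k. Then p can be written in exactly one way as p = Σ_{0 ≤ j ≤ k/2} (r²)^j · h_j, where each h_j is a harmonic polynomial (Δh_j = 0) that is homogeneous of degree k − 2j (or zero). Equivalently, ℂ[x₁, …, xₙ] ≅ ⨁_{k ≥ 0} H^k ⊗ ℂ[r²], where H^k is the space of harmonic homogeneous polynomials of degree k. -/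
open MvPolynomial

/-!
The operator `Δ ∘ r²` is bijective on homogeneous polynomials of degree `k`, so every homogeneous
`p` of degree `k + 2` is `h₀ + r² q` with `h₀` harmonic for exactly one homogeneous `q` of degree
`k`; iterating on `q` yields the decomposition.

On degree `k` the operator `Δ ∘ r²` equals `r² Δ + c` with `c = 2n + 4k`. Moreover `Δ` intertwines
`r² Δ + c` in degree `k + 2` with `r² Δ + (c + 2n + 4k)` in degree `k`, so bijectivity of `r² Δ + c`
for all natural `c > 0` follows by induction on the degree.
-/

section HarmonicDecomposition

variable {σ R : Type*} [Fintype σ]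

section CommSemiring

variable [CommSemiring R]

/-- The Laplace operator `∑ i, ∂²/∂xᵢ²` on polynomials. -/
noncomputable def polyLaplacian : MvPolynomial σ R →ₗ[R] MvPolynomial σ R :=
  ∑ i, (pderiv i).toLinearMap ∘ₗ (pderiv i).toLinearMap

variable (σ R) in
/-- The polynomial `r² = ∑ i, xᵢ²`. -/
noncomputable def radiusSq : MvPolynomial σ R :=
  ∑ i, X i ^ 2

variable (σ R) in
/-- The space `H^k` of harmonic homogeneous polynomials of degree `k`. -/
noncomputable def harmonicSubmodule (k : ℕ) : Submodule R (MvPolynomial σ R) :=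
  homogeneousSubmodule σ R k ⊓ polyLaplacian.ker

/-- `h` is a harmonic decomposition `p = ∑ j ≤ k / 2, (r²)ʲ * h j` of the degree `k` polynomial `p`.
Since the sequence `h` is indexed by all of `ℕ`, it is required to vanish where the degree
`k - 2 * j` is truncated. -/
structure IsHarmonicDecomposition (k : ℕ) (p : MvPolynomial σ R) (h : ℕ → MvPolynomial σ R) :
    Prop where
  mem_harmonicSubmodule (j : ℕ) : h j ∈ harmonicSubmodule σ R (k - 2 * j)
  eq_zero (j : ℕ) : k < 2 * j → h j = 0
  eq_sum : p = ∑ j ∈ Finset.range (k / 2 + 1), radiusSq σ R ^ j * h j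

variable {k : ℕ} {p q : MvPolynomial σ R} {h : ℕ → MvPolynomial σ R}

lemma polyLaplacian_apply (p : MvPolynomial σ R) :
    polyLaplacian p = ∑ i, pderiv i (pderiv i p) := by
  simp [polyLaplacian]

lemma mem_harmonicSubmodule_iff :
    p ∈ harmonicSubmodule σ R k ↔ p.IsHomogeneous k ∧ polyLaplacian p = 0 :=
  Iff.rfl

lemma isHomogeneous_radiusSq : (radiusSq σ R).IsHomogeneous 2 :=
  .sum _ _ _ fun i _ ↦ isHomogeneous_X_pow i 2

lemma isHomogeneous_radiusSq_mul (hq : q.IsHomogeneous k) :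
    (radiusSq σ R * q).IsHomogeneous (k + 2) := by
  simpa only [add_comm] using isHomogeneous_radiusSq.mul hq

lemma isHomogeneous_polyLaplacian (hp : p.IsHomogeneous k) :
    (polyLaplacian p).IsHomogeneous (k - 2) := by
  rw [polyLaplacian_apply]
  exact .sum _ _ _ fun i _ ↦ hp.pderiv.pderiv

lemma polyLaplacian_eq_zero_of_lt_two (hp : p.IsHomogeneous k) (hk : k < 2) :
    polyLaplacian p = 0 := by
  rw [polyLaplacian_apply]
  refine Finset.sum_eq_zero fun i _ ↦ ?_
  have hi : (pderiv i p).IsHomogeneous 0 := by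
    simpa only [Nat.sub_eq_zero_of_le (Nat.le_of_lt_succ hk)] using hp.pderiv (i := i)
  rw [totalDegree_eq_zero_iff_eq_C.mp ((totalDegree_zero_iff_isHomogeneous _).mpr hi), pderiv_C]

lemma pderiv_radiusSq (i : σ) : pderiv i (radiusSq σ R) = 2 * X i := by
  classical
  simp [radiusSq, pderiv_X, Pi.single_apply, Derivation.leibniz_pow]

lemma pderiv_pderiv_radiusSq_mul (i : σ) (q : MvPolynomial σ R) :
    pderiv i (pderiv i (radiusSq σ R * q)) =
      radiusSq σ R * pderiv i (pderiv i q) + 4 * (X i * pderiv i q) + 2 * q := by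
  have two : pderiv i (2 : MvPolynomial σ R) = 0 := by
    simpa using (pderiv i : Derivation R (MvPolynomial σ R) _).map_natCast 2
  simp only [pderiv_mul, map_add, pderiv_radiusSq, pderiv_X_self, two]
  ring

lemma polyLaplacian_radiusSq_mul (hq : q.IsHomogeneous k) :
    polyLaplacian (radiusSq σ R * q) =
      radiusSq σ R * polyLaplacian q + (2 * Fintype.card σ + 4 * k) • q := by
  simp only [polyLaplacian_apply, pderiv_pderiv_radiusSq_mul, Finset.sum_add_distrib,
    ← Finset.mul_sum, hq.sum_X_mul_pderiv, Finset.sum_const, Finset.card_univ, nsmul_eq_mul]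
  push_cast
  ring

lemma polyLaplacian_radiusSq_mul_polyLaplacian_add_nsmul (hq : q.IsHomogeneous (k + 2)) (c : ℕ) :
    polyLaplacian (radiusSq σ R * polyLaplacian q + c • q) =
      radiusSq σ R * polyLaplacian (polyLaplacian q) +
        (2 * Fintype.card σ + 4 * k + c) • polyLaplacian q := by
  rw [map_add, map_nsmul, polyLaplacian_radiusSq_mul (isHomogeneous_polyLaplacian hq),
    Nat.add_sub_cancel, add_assoc, ← add_nsmul]

lemma IsHarmonicDecomposition.isHomogeneous (hh : IsHarmonicDecomposition k p h) :
    p.IsHomogeneous k := by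
  rw [hh.eq_sum]
  refine .sum _ _ _ fun j hj ↦ ?_
  have hdeg : 2 * j + (k - 2 * j) = k := by
    have := Finset.mem_range.mp hj
    omega
  simpa only [hdeg] using (isHomogeneous_radiusSq.pow j).mul (hh.mem_harmonicSubmodule j).1

lemma isHarmonicDecomposition_iff_of_lt_two (hk : k < 2) :
    IsHarmonicDecomposition k p h ↔ p.IsHomogeneous k ∧ h = Pi.single 0 p := by
  constructor
  · refine fun hh ↦ ⟨hh.isHomogeneous, funext fun j ↦ ?_⟩
    obtain rfl | hj := eq_or_ne j 0
    · simpa [Nat.div_eq_of_lt hk] using hh.eq_sum.symm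
    · rw [hh.eq_zero j (by omega), Pi.single_eq_of_ne hj]
  · rintro ⟨hp, rfl⟩
    refine ⟨fun j ↦ ?_, fun j hj ↦ Pi.single_eq_of_ne (by omega) _, ?_⟩
    · obtain rfl | hj := eq_or_ne j 0
      · simpa using mem_harmonicSubmodule_iff.mpr ⟨hp, polyLaplacian_eq_zero_of_lt_two hp hk⟩
      · simp [hj]
    · simp [Nat.div_eq_of_lt hk]

lemma isHarmonicDecomposition_add_two_iff :
    IsHarmonicDecomposition (k + 2) p h ↔ h 0 ∈ harmonicSubmodule σ R (k + 2) ∧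
      ∃ q, IsHarmonicDecomposition k q (fun j ↦ h (j + 1)) ∧ p = h 0 + radiusSq σ R * q := by
  have hdeg (j : ℕ) : k + 2 - 2 * (j + 1) = k - 2 * j := by omega
  have hsum : ∑ j ∈ Finset.range ((k + 2) / 2 + 1), radiusSq σ R ^ j * h j =
      h 0 + radiusSq σ R * ∑ j ∈ Finset.range (k / 2 + 1), radiusSq σ R ^ j * h (j + 1) := by
    rw [Nat.add_div_right k two_pos, Finset.sum_range_succ', pow_zero, one_mul, add_comm,
      Finset.mul_sum]
    simp only [pow_succ', mul_assoc]
  constructor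
  · intro hh
    refine ⟨hh.mem_harmonicSubmodule 0, _, ⟨fun j ↦ ?_, fun j hj ↦ ?_, rfl⟩, ?_⟩
    · simpa only [hdeg] using hh.mem_harmonicSubmodule (j + 1)
    · exact hh.eq_zero (j + 1) (by omega)
    · rw [← hsum, hh.eq_sum]
  · rintro ⟨h0, q, hq, hp⟩
    refine ⟨?_, ?_, by rw [hp, hsum, hq.eq_sum]⟩
    · rintro (_ | j)
      · exact h0
      · simpa only [hdeg] using hq.mem_harmonicSubmodule j
    · rintro (_ | j) hj
      · omega
      · exact hq.eq_zero j (by omega)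

lemma isHarmonicDecomposition_iff :
    IsHarmonicDecomposition k p h ↔
      (∀ j, ∑ i, pderiv i (pderiv i (h j)) = 0) ∧
      (∀ j, h j = 0 ∨ (h j).IsHomogeneous (k - 2 * j)) ∧
      (∀ j, k < 2 * j → h j = 0) ∧
      p = ∑ j ∈ Finset.range (k / 2 + 1), (∑ i, (X i : MvPolynomial σ R) ^ 2) ^ j * h j := by
  simp only [← polyLaplacian_apply]
  constructor
  · exact fun ⟨hmem, hzero, hsum⟩ ↦
      ⟨fun j ↦ (hmem j).2, fun j ↦ .inr (hmem j).1, hzero, hsum⟩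
  · rintro ⟨harm, hom, hzero, hsum⟩
    exact ⟨fun j ↦ ⟨(hom j).elim (fun hj ↦ hj ▸ isHomogeneous_zero _ _ _) id, harm j⟩, hzero, hsum⟩

end CommSemiring

section CommRing

variable [CommRing R] {k : ℕ} {p q : MvPolynomial σ R}

lemma eq_zero_of_radiusSq_mul_polyLaplacian_add_nsmul_eq_zero [IsAddTorsionFree R] {c : ℕ}
    (hc : c ≠ 0) (hq : q.IsHomogeneous k)
    (h : radiusSq σ R * polyLaplacian q + c • q = 0) : q = 0 := by
  induction k using Nat.strong_induction_on generalizing c q with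
  | _ k ih =>
  suffices hΔ : polyLaplacian q = 0 by
    rw [hΔ, mul_zero, zero_add] at h
    ext m
    simpa only [coeff_smul, coeff_zero, nsmul_eq_zero_iff_right hc] using congrArg (coeff m) h
  obtain hk | hk := lt_or_ge k 2
  · exact polyLaplacian_eq_zero_of_lt_two hq hk
  obtain ⟨k, rfl⟩ := Nat.exists_eq_add_of_le' hk
  refine ih k (by omega) (c := 2 * Fintype.card σ + 4 * k + c) (by omega)
    (isHomogeneous_polyLaplacian hq) ?_
  rw [← polyLaplacian_radiusSq_mul_polyLaplacian_add_nsmul hq, h, map_zero]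

lemma exists_radiusSq_mul_polyLaplacian_add_nsmul_eq [Algebra ℚ R] {c : ℕ} (hc : c ≠ 0)
    (hp : p.IsHomogeneous k) :
    ∃ q, q.IsHomogeneous k ∧ radiusSq σ R * polyLaplacian q + c • q = p := by
  induction k using Nat.strong_induction_on generalizing c p with
  | _ k ih =>
  -- Applying `Δ` to the equation for `q` shows that `u` must be `Δ q`, which determines `q`.
  obtain ⟨u, hu, hΔ⟩ : ∃ u, (radiusSq σ R * u).IsHomogeneous k ∧
      polyLaplacian (radiusSq σ R * u) + c • u = polyLaplacian p := by
    obtain hk | hk := lt_or_ge k 2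
    · refine ⟨0, ?_, ?_⟩
      · simpa only [mul_zero] using isHomogeneous_zero σ R k
      · simp [polyLaplacian_eq_zero_of_lt_two hp hk]
    · obtain ⟨k, rfl⟩ := Nat.exists_eq_add_of_le' hk
      obtain ⟨u, hu, hΔ⟩ := ih k (by omega) (c := 2 * Fintype.card σ + 4 * k + c) (by omega)
        (isHomogeneous_polyLaplacian hp)
      refine ⟨u, isHomogeneous_radiusSq_mul hu, ?_⟩
      rw [← hΔ, polyLaplacian_radiusSq_mul hu, add_assoc, ← add_nsmul]
  have cancel (v : MvPolynomial σ R) : (c : ℚ)⁻¹ • c • v = v := by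
    rw [← Nat.cast_smul_eq_nsmul ℚ, inv_smul_smul₀ (Nat.cast_ne_zero.mpr hc)]
  refine ⟨(c : ℚ)⁻¹ • (p - radiusSq σ R * u),
    (homogeneousSubmodule σ R k).smul_of_tower_mem _ (hp.sub hu), ?_⟩
  rw [map_rat_smul, map_sub, ← hΔ, add_sub_cancel_left, cancel, smul_comm, cancel,
    add_sub_cancel]

variable [Nonempty σ] [Algebra ℚ R]

lemma existsUnique_polyLaplacian_radiusSq_mul_eq (hp : p.IsHomogeneous k) :
    ∃! q, q.IsHomogeneous k ∧ polyLaplacian (radiusSq σ R * q) = p := by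
  have : IsAddTorsionFree R := .of_module_rat R
  have hc : 2 * Fintype.card σ + 4 * k ≠ 0 := by positivity
  obtain ⟨q, hq, hqp⟩ := exists_radiusSq_mul_polyLaplacian_add_nsmul_eq hc hp
  rw [← polyLaplacian_radiusSq_mul hq] at hqp
  refine ⟨q, ⟨hq, hqp⟩, fun q' ⟨hq', hqp'⟩ ↦ sub_eq_zero.mp ?_⟩
  refine eq_zero_of_radiusSq_mul_polyLaplacian_add_nsmul_eq_zero hc (hq'.sub hq) ?_
  rw [← polyLaplacian_radiusSq_mul (hq'.sub hq), mul_sub, map_sub, hqp, hqp', sub_self]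

lemma existsUnique_sub_radiusSq_mul_mem_harmonicSubmodule (hp : p.IsHomogeneous (k + 2)) :
    ∃! q, q.IsHomogeneous k ∧ p - radiusSq σ R * q ∈ harmonicSubmodule σ R (k + 2) := by
  have hΔp : (polyLaplacian p).IsHomogeneous k := isHomogeneous_polyLaplacian hp
  refine (existsUnique_congr fun q ↦ and_congr_right fun hq ↦ ?_).mpr
    (existsUnique_polyLaplacian_radiusSq_mul_eq hΔp)
  rw [mem_harmonicSubmodule_iff, map_sub, sub_eq_zero, eq_comm (a := polyLaplacian p)]
  exact and_iff_right (hp.sub (isHomogeneous_radiusSq_mul hq))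

theorem harmonic_decomposition_general (hp : p.IsHomogeneous k) :
    ∃! h : ℕ → MvPolynomial σ R, IsHarmonicDecomposition k p h := by
  induction k using Nat.strong_induction_on generalizing p with
  | _ k ih =>
  obtain hk | hk := lt_or_ge k 2
  · simp [isHarmonicDecomposition_iff_of_lt_two hk, hp]
  obtain ⟨k, rfl⟩ := Nat.exists_eq_add_of_le' hk
  obtain ⟨q, ⟨hq, hpq⟩, q_unique⟩ := existsUnique_sub_radiusSq_mul_mem_harmonicSubmodule hp
  obtain ⟨g, hg, g_unique⟩ := ih k (by omega) hq
  refine ⟨fun | 0 => p - radiusSq σ R * q | j + 1 => g j,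
    isHarmonicDecomposition_add_two_iff.mpr ⟨hpq, q, hg, (sub_add_cancel _ _).symm⟩, fun h hh ↦ ?_⟩
  obtain ⟨h0, q', hq', hp'⟩ := isHarmonicDecomposition_add_two_iff.mp hh
  have h0_eq : h 0 = p - radiusSq σ R * q' := eq_sub_of_add_eq hp'.symm
  obtain rfl : q' = q := q_unique q' ⟨hq'.isHomogeneous, h0_eq ▸ h0⟩
  funext j
  cases j with
  | zero => exact h0_eq
  | succ j => exact congrFun (g_unique _ hq') j

end CommRing

end HarmonicDecomposition

/-- Every homogeneous polynomial `p` of degree `k` in `ℂ[x₁,…,xₙ]` can be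
written in exactly one way as `p = Σ_{0 ≤ j ≤ k/2} (r²)ʲ · hⱼ` with each `hⱼ`
harmonic and homogeneous of degree `k − 2j` (or zero). -/
theorem harmonic_decomposition
    (n : ℕ) (hn : 1 ≤ n) (k : ℕ)
    (p : MvPolynomial (Fin n) ℂ) (hp : p.IsHomogeneous k) :
    ∃! h : ℕ → MvPolynomial (Fin n) ℂ,
      (∀ j, (∑ i : Fin n, pderiv i (pderiv i (h j))) = 0) ∧
      (∀ j, h j = 0 ∨ (h j).IsHomogeneous (k - 2 * j)) ∧
      (∀ j, k < 2 * j → h j = 0) ∧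
      p = ∑ j ∈ Finset.range (k / 2 + 1),
            (∑ i : Fin n, (X i : MvPolynomial (Fin n) ℂ) ^ 2) ^ j * h j := by
  have : Nonempty (Fin n) := ⟨⟨0, hn⟩⟩
  simpa only [isHarmonicDecomposition_iff] using harmonic_decomposition_general hp
end
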